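/- arXiv:1707.06645 — 3 statements merged into one kernel-verified Lean document; each statement's English description precedes it below -/
import Mathlib

section
/- Let ρ be a separable density matrix on ℂ^m ⊗ ℂ^n, i.e. ρ = Σ_{i=1}^N λ_i ρ_i^A ⊗ ρ_i^B where each ρ_i^A is a density matrix on ℂ^m, each ρ_i^B is a density matrix on ℂ^n, λ_i ≥ 0 and Σ_i λ_i = 1. Then ρ admits a (finite) hidden variable model: for every finite POVM {E_k}_{k∈K} on ℂ^m and every finite POVM {D_l}_{l∈L} on ℂ^n there exist a finite set X, a probability weight function μ : X → [0,1] with Σ_{x∈X} μ(x) = 1, and functions F_E : K × X → [0,1], F_D : L × X → [0,1], such that tr(ρ (E_k ⊗ D_l)) = Σ_{x∈X} F_E(k,x) F_D(l,x) μ(x) for all k ∈ K and l ∈ L. -/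
/-!
The hidden variable is the index `i` of the separable decomposition, distributed according to `lam`,
with response functions `tr (ρA i * E k)` and `tr (ρB i * D l)` (Born's rule for the two local
states). The trace of a Kronecker product factorizes, which gives the required formula. These
responses are genuine probabilities: each is nonnegative as the trace of a product of two positive
semidefinite matrices (`trace_mul_nonneg_of_posSemidef`), and they sum to `tr (ρA i) = 1`, resp. `tr (ρB i) = 1`, over the
outcomes because the effects sum to the identity (`born_rule_mem_unitInterval`).
-/

open Matrix Kronecker BigOperators ComplexOrder

/-- Writing `A = Cᴴ * C`, cyclicity turns the trace into that of the positive semidefinite matrix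
`C * B * Cᴴ`. -/
lemma trace_mul_nonneg_of_posSemidef {d : ℕ} {A B : Matrix (Fin d) (Fin d) ℂ}
    (hA : A.PosSemidef) (hB : B.PosSemidef) : 0 ≤ (A * B).trace := by
  open scoped MatrixOrder Matrix.Norms.L2Operator in
  obtain ⟨C, rfl⟩ := CStarAlgebra.nonneg_iff_eq_star_mul_self.mp hA.nonneg
  rw [Matrix.mul_assoc, Matrix.trace_mul_comm]
  exact (hB.mul_mul_conjTranspose_same C).trace_nonneg

/-- Born's rule for a density matrix `A` and a finite POVM `E` produces numbers in `[0, 1]`; the last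
conjunct records that the complex trace is real. -/
lemma born_rule_mem_unitInterval {d : ℕ} {K : Type} [Fintype K] {A : Matrix (Fin d) (Fin d) ℂ}
    (hA : A.PosSemidef ∧ A.trace = 1) {E : K → Matrix (Fin d) (Fin d) ℂ}
    (hE : ∀ k, (E k).PosSemidef) (hsum : ∑ k, E k = 1) (k : K) :
    0 ≤ (A * E k).trace.re ∧ (A * E k).trace.re ≤ 1 ∧
      (((A * E k).trace.re : ℝ) : ℂ) = (A * E k).trace := by
  have hnonneg : ∀ j, 0 ≤ (A * E j).trace := fun j => trace_mul_nonneg_of_posSemidef hA.1 (hE j)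
  have htotal : ∑ j, (A * E j).trace = 1 := by
    rw [← Matrix.trace_sum, ← Finset.mul_sum, hsum, Matrix.mul_one, hA.2]
  have hle : (A * E k).trace ≤ 1 :=
    htotal ▸ Finset.single_le_sum (f := fun j => (A * E j).trace) (fun j _ => hnonneg j)
      (Finset.mem_univ k)
  refine ⟨(Complex.le_def.mp (hnonneg k)).1, (Complex.le_def.mp hle).1, ?_⟩
  exact Complex.ext rfl (Complex.le_def.mp (hnonneg k)).2

/-- Every separable density matrix on ℂ^m ⊗ ℂ^n admits a finite
hidden variable model for every pair of finite POVMs. -/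
theorem separable_admits_hidden_variable_model
    {m n N : ℕ}
    (ρA : Fin N → Matrix (Fin m) (Fin m) ℂ)
    (ρB : Fin N → Matrix (Fin n) (Fin n) ℂ)
    (lam : Fin N → ℝ)
    (hρA : ∀ i, (ρA i).PosSemidef ∧ (ρA i).trace = 1)
    (hρB : ∀ i, (ρB i).PosSemidef ∧ (ρB i).trace = 1)
    (hlam : ∀ i, 0 ≤ lam i) (hlamsum : ∑ i, lam i = 1)
    (ρ : Matrix (Fin m × Fin n) (Fin m × Fin n) ℂ)
    (hρ : ρ = ∑ i, (lam i : ℂ) • (ρA i ⊗ₖ ρB i))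
    (K L : Type) [Fintype K] [Fintype L]
    (E : K → Matrix (Fin m) (Fin m) ℂ)
    (D : L → Matrix (Fin n) (Fin n) ℂ)
    (hEpos : ∀ k, (E k).PosSemidef) (hEsum : ∑ k, E k = 1)
    (hDpos : ∀ l, (D l).PosSemidef) (hDsum : ∑ l, D l = 1) :
    ∃ (M : ℕ) (μ : Fin M → ℝ) (FE : K → Fin M → ℝ) (FD : L → Fin M → ℝ),
      (∀ x, 0 ≤ μ x ∧ μ x ≤ 1) ∧ (∑ x, μ x = 1) ∧
      (∀ k x, 0 ≤ FE k x ∧ FE k x ≤ 1) ∧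
      (∀ l x, 0 ≤ FD l x ∧ FD l x ≤ 1) ∧
      (∀ k l, (ρ * (E k ⊗ₖ D l)).trace =
        ((∑ x, FE k x * FD l x * μ x : ℝ) : ℂ)) := by
  have hEprob := fun k i => born_rule_mem_unitInterval (hρA i) hEpos hEsum k
  have hDprob := fun l i => born_rule_mem_unitInterval (hρB i) hDpos hDsum l
  refine ⟨N, lam, fun k i => (ρA i * E k).trace.re, fun l i => (ρB i * D l).trace.re,
    fun i => ⟨hlam i, ?_⟩, hlamsum, fun k i => ⟨(hEprob k i).1, (hEprob k i).2.1⟩,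
    fun l i => ⟨(hDprob l i).1, (hDprob l i).2.1⟩, fun k l => ?_⟩
  · exact hlamsum ▸ Finset.single_le_sum (fun j _ => hlam j) (Finset.mem_univ i)
  · rw [hρ, Finset.sum_mul, Matrix.trace_sum, Complex.ofReal_sum]
    refine Finset.sum_congr rfl fun i _ => ?_
    rw [Complex.ofReal_mul, Complex.ofReal_mul, (hEprob k i).2.2, (hDprob l i).2.2,
      Matrix.smul_mul, Matrix.trace_smul, ← Matrix.mul_kronecker_mul, Matrix.trace_kronecker,
      smul_eq_mul, mul_comm]
end

section
/- Let Σ be the 4×4 matrix determined by Σ|00⟩ = Φ⁺, Σ|11⟩ = Φ⁻, Σ|10⟩ = Ψ⁺, Σ|01⟩ = Ψ⁻, and let Ω := (1₂ ⊗ Σ)(Σ ⊗ 1₂) acting on ℂ² ⊗ ℂ² ⊗ ℂ² ≅ ℂ⁸. Then for every vector ψ ∈ ℂ², Ω(ψ ⊗ Φ⁺) = Φ⁺ ⊗ ψ. -/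
open Matrix Kronecker BigOperators

/-- Computational basis vector |ij⟩ of ℂ² ⊗ ℂ². -/
def ket2 (i j : Fin 2) : Fin 2 × Fin 2 → ℂ := fun p => if p = (i, j) then 1 else 0

/-- Bell state Φ⁺ = (|00⟩ + |11⟩)/√2. -/
noncomputable def PhiPlus : Fin 2 × Fin 2 → ℂ := (Real.sqrt 2 : ℂ)⁻¹ • (ket2 0 0 + ket2 1 1)

/-- Bell state Φ⁻ = (|00⟩ − |11⟩)/√2. -/
noncomputable def PhiMinus : Fin 2 × Fin 2 → ℂ := (Real.sqrt 2 : ℂ)⁻¹ • (ket2 0 0 - ket2 1 1)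

/-- Bell state Ψ⁺ = (|01⟩ + |10⟩)/√2. -/
noncomputable def PsiPlus : Fin 2 × Fin 2 → ℂ := (Real.sqrt 2 : ℂ)⁻¹ • (ket2 0 1 + ket2 1 0)

/-- Bell state Ψ⁻ = (|01⟩ − |10⟩)/√2. -/
noncomputable def PsiMinus : Fin 2 × Fin 2 → ℂ := (Real.sqrt 2 : ℂ)⁻¹ • (ket2 0 1 - ket2 1 0)

/-!
The hypotheses on `S` say that its four columns are the Bell states, so every entry of `Ω` is known.
Both sides are linear in `ψ`; on basis vectors the identity reads

* `|0⟩Φ⁺ ↦ (Φ⁺|0⟩ + Ψ⁻|1⟩)/√2 ↦ (|0⟩(Φ⁺ + Φ⁻) + |1⟩(Ψ⁺ - Ψ⁻))/2 = Φ⁺|0⟩`,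
* `|1⟩Φ⁺ ↦ (Ψ⁺|0⟩ + Φ⁻|1⟩)/√2 ↦ (|0⟩(Ψ⁺ + Ψ⁻) + |1⟩(Φ⁺ - Φ⁻))/2 = Φ⁺|1⟩`,

and it is checked coordinatewise. The only arithmetic input is `(1/√2)² = 1/2`.
-/

/-- Applying a matrix to `|ij⟩` extracts its column `(i, j)`. -/
lemma mulVec_ket2 (S : Matrix (Fin 2 × Fin 2) (Fin 2 × Fin 2) ℂ) (i j : Fin 2)
    (p : Fin 2 × Fin 2) : S.mulVec (ket2 i j) p = S p (i, j) := by
  simp [Matrix.mulVec, dotProduct, ket2]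

/-- With Ω = (1₂ ⊗ Σ)(Σ ⊗ 1₂) acting on ℂ² ⊗ ℂ² ⊗ ℂ², one has
Ω(ψ ⊗ Φ⁺) = Φ⁺ ⊗ ψ for every ψ ∈ ℂ². -/
theorem Omega_transfers_state
    (S : Matrix (Fin 2 × Fin 2) (Fin 2 × Fin 2) ℂ)
    (h00 : S.mulVec (ket2 0 0) = PhiPlus)
    (h11 : S.mulVec (ket2 1 1) = PhiMinus)
    (h10 : S.mulVec (ket2 1 0) = PsiPlus)
    (h01 : S.mulVec (ket2 0 1) = PsiMinus)
    (Ω : Matrix (Fin 2 × Fin 2 × Fin 2) (Fin 2 × Fin 2 × Fin 2) ℂ)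
    (hΩ : Ω = ((1 : Matrix (Fin 2) (Fin 2) ℂ) ⊗ₖ S) *
      Matrix.reindex (Equiv.prodAssoc (Fin 2) (Fin 2) (Fin 2))
        (Equiv.prodAssoc (Fin 2) (Fin 2) (Fin 2))
        (S ⊗ₖ (1 : Matrix (Fin 2) (Fin 2) ℂ)))
    (ψ : Fin 2 → ℂ) :
    Ω.mulVec (fun p => ψ p.1 * PhiPlus p.2) = fun p => PhiPlus (p.1, p.2.1) * ψ p.2.2 := by
  have c00 : ∀ p, S p (0, 0) = PhiPlus p := fun p => by rw [← mulVec_ket2 S 0 0, h00]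
  have c11 : ∀ p, S p (1, 1) = PhiMinus p := fun p => by rw [← mulVec_ket2 S 1 1, h11]
  have c10 : ∀ p, S p (1, 0) = PsiPlus p := fun p => by rw [← mulVec_ket2 S 1 0, h10]
  have c01 : ∀ p, S p (0, 1) = PsiMinus p := fun p => by rw [← mulVec_ket2 S 0 1, h01]
  have hr : ((Real.sqrt 2 : ℂ)⁻¹) ^ 2 = 1 / 2 := by
    rw [inv_pow, ← Complex.ofReal_pow, Real.sq_sqrt (by norm_num)]
    norm_num
  subst hΩ
  rw [← Matrix.mulVec_mulVec]
  ext ⟨a, b, c⟩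
  simp only [Matrix.mulVec, dotProduct, Fintype.sum_prod_type, Fin.sum_univ_two,
    Matrix.reindex_apply, Matrix.submatrix_apply, Matrix.kroneckerMap_apply,
    Equiv.prodAssoc_symm_apply, c00, c01, c10, c11, Matrix.one_apply]
  -- The scalar `1/√2` is made an atom `r` subject only to `r ^ 2 = 1 / 2`.
  simp only [PhiPlus, PhiMinus, PsiPlus, PsiMinus]
  generalize ((Real.sqrt 2 : ℂ)⁻¹) = r at hr ⊢
  fin_cases a <;> fin_cases b <;> fin_cases c <;> simp [ket2] <;> grind
end

section
/- Cayley's hyperdeterminant is invariant under the local action of SL(2,ℂ)×SL(2,ℂ)×SL(2,ℂ): if A, B, C are complex 2×2 matrices with det A = det B = det C = 1 and Ψ ∈ ℂ² ⊗ ℂ² ⊗ ℂ² is any vector, then Det((A ⊗ B ⊗ C) Ψ) = Det(Ψ), where A ⊗ B ⊗ C is the Kronecker product acting on ℂ⁸. -/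
/-!
The operator `A ⊗ B ⊗ C` is the composite of three operators, each acting on a single tensor
factor. A matrix `M` acting on a single factor multiplies the hyperdeterminant by `(det M) ^ 2`:
writing `a` as a pair of `2 × 2` slices `S₀, S₁` along that factor, the hyperdeterminant is the
discriminant of the binary quadratic form `det (x S₀ + y S₁)`, and `M` acts by a linear
substitution of `(x, y)`. For each of the three factors this is a polynomial identity
(`hyperDet_act₁`, `hyperDet_act₂`, `hyperDet_act₃`), and the theorem follows since all three
determinants are `1`.
-/

open Matrix Kronecker BigOperators

/-- Cayley's hyperdeterminant of the coefficient hypermatrix of a three-qubit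
vector Ψ = Σ a_{ijk} |ijk⟩. -/
noncomputable def hyperDet (a : Fin 2 × Fin 2 × Fin 2 → ℂ) : ℂ :=
  a (0,0,0) ^ 2 * a (1,1,1) ^ 2 + a (0,0,1) ^ 2 * a (1,1,0) ^ 2
    + a (0,1,0) ^ 2 * a (1,0,1) ^ 2 + a (0,1,1) ^ 2 * a (1,0,0) ^ 2
  - 2 * (a (0,0,0) * a (1,1,1) * a (0,1,1) * a (1,0,0)
    + a (0,0,0) * a (1,1,1) * a (1,0,1) * a (0,1,0)
    + a (0,0,0) * a (1,1,1) * a (1,1,0) * a (0,0,1)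
    + a (0,1,1) * a (1,0,0) * a (1,0,1) * a (0,1,0)
    + a (0,1,1) * a (1,0,0) * a (1,1,0) * a (0,0,1)
    + a (1,0,1) * a (0,1,0) * a (1,1,0) * a (0,0,1))
  + 4 * (a (0,0,0) * a (0,1,1) * a (1,0,1) * a (1,1,0)
    + a (0,0,1) * a (0,1,0) * a (1,0,0) * a (1,1,1))

/-- The action of `M` on the first tensor factor, `M ⊗ 1 ⊗ 1`, in coordinates. -/
noncomputable def act₁ (M : Matrix (Fin 2) (Fin 2) ℂ) (a : Fin 2 × Fin 2 × Fin 2 → ℂ) :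
    Fin 2 × Fin 2 × Fin 2 → ℂ :=
  fun p => M p.1 0 * a (0, p.2.1, p.2.2) + M p.1 1 * a (1, p.2.1, p.2.2)

/-- The action of `M` on the second tensor factor, `1 ⊗ M ⊗ 1`, in coordinates. -/
noncomputable def act₂ (M : Matrix (Fin 2) (Fin 2) ℂ) (a : Fin 2 × Fin 2 × Fin 2 → ℂ) :
    Fin 2 × Fin 2 × Fin 2 → ℂ :=
  fun p => M p.2.1 0 * a (p.1, 0, p.2.2) + M p.2.1 1 * a (p.1, 1, p.2.2)

/-- The action of `M` on the third tensor factor, `1 ⊗ 1 ⊗ M`, in coordinates. -/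
noncomputable def act₃ (M : Matrix (Fin 2) (Fin 2) ℂ) (a : Fin 2 × Fin 2 × Fin 2 → ℂ) :
    Fin 2 × Fin 2 × Fin 2 → ℂ :=
  fun p => M p.2.2 0 * a (p.1, p.2.1, 0) + M p.2.2 1 * a (p.1, p.2.1, 1)

lemma hyperDet_act₁ (M : Matrix (Fin 2) (Fin 2) ℂ) (a : Fin 2 × Fin 2 × Fin 2 → ℂ) :
    hyperDet (act₁ M a) = M.det ^ 2 * hyperDet a := by
  simp only [hyperDet, act₁, Matrix.det_fin_two]
  ring

lemma hyperDet_act₂ (M : Matrix (Fin 2) (Fin 2) ℂ) (a : Fin 2 × Fin 2 × Fin 2 → ℂ) :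
    hyperDet (act₂ M a) = M.det ^ 2 * hyperDet a := by
  simp only [hyperDet, act₂, Matrix.det_fin_two]
  ring

lemma hyperDet_act₃ (M : Matrix (Fin 2) (Fin 2) ℂ) (a : Fin 2 × Fin 2 × Fin 2 → ℂ) :
    hyperDet (act₃ M a) = M.det ^ 2 * hyperDet a := by
  simp only [hyperDet, act₃, Matrix.det_fin_two]
  ring

lemma kronecker_mulVec_eq_act (A B C : Matrix (Fin 2) (Fin 2) ℂ)
    (a : Fin 2 × Fin 2 × Fin 2 → ℂ) :
    (A ⊗ₖ (B ⊗ₖ C)).mulVec a = act₁ A (act₂ B (act₃ C a)) := by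
  funext p
  simp only [Matrix.mulVec, dotProduct, Fintype.sum_prod_type, Fin.sum_univ_two,
    Matrix.kroneckerMap_apply, act₁, act₂, act₃]
  ring

/-- Cayley's hyperdeterminant is invariant under the local action
of SL(2,ℂ) × SL(2,ℂ) × SL(2,ℂ): Det((A ⊗ B ⊗ C)Ψ) = Det(Ψ) whenever
det A = det B = det C = 1. -/
theorem hyperdet_sl2_invariant
    (A B C : Matrix (Fin 2) (Fin 2) ℂ)
    (hA : A.det = 1) (hB : B.det = 1) (hC : C.det = 1)
    (Ψ : Fin 2 × Fin 2 × Fin 2 → ℂ) :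
    hyperDet ((A ⊗ₖ (B ⊗ₖ C)).mulVec Ψ) = hyperDet Ψ := by
  rw [kronecker_mulVec_eq_act, hyperDet_act₁, hyperDet_act₂, hyperDet_act₃, hA, hB, hC]
  ring
end
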